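/- arXiv:0705.2686 — 2 statements merged into one kernel-verified Lean document; each statement's English description precedes it below -/
import Mathlib

section
/- Let M_j be an R_j-module for each j ∈ I, each regarded as an R-module via the projection R → R_j, and let N be any R-module. Then for each i ∈ I the R-module M_i ⊗_{R_i} (e_i N) is a retract of (∏_{j∈I} M_j) ⊗_R N: there exist R-module homomorphisms s : M_i ⊗_{R_i} (e_i N) → (∏_{j∈I} M_j) ⊗_R N and p : (∏_{j∈I} M_j) ⊗_R N → M_i ⊗_{R_i} (e_i N) with p ∘ s the identity. (Here e_i N is an R_i-module, R_i acting through the i-th component.) -/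
open scoped Classical TensorProduct

noncomputable section

variable {I : Type*} (R : I → Type*) [∀ i, CommRing (R i)]

/-- The idempotent `e_i ∈ R = ∏_j R_j` whose `i`-th component is `1` and the others `0`. -/
def piIdem (i : I) : ∀ j, R j :=
  fun j => if j = i then 1 else 0

lemma piIdem_eq_single (i : I) : piIdem R i = Pi.single i 1 := by
  funext j
  by_cases h : j = i
  · subst h; simp [piIdem]
  · simp [piIdem, h, Pi.single_eq_of_ne h]

lemma piIdem_mul_self (i : I) : piIdem R i * piIdem R i = piIdem R i := by
  funext j
  by_cases h : j = i <;> simp [piIdem, h]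

variable (M : I → Type*) [∀ i, AddCommGroup (M i)] [∀ i, Module (R i) (M i)]

/-- Each `R_i`-module `M i` is regarded as a module over `R = ∏_j R_j` via the
projection `R → R_i`. -/
instance projModule (i : I) : Module (∀ j, R j) (M i) :=
  Module.compHom (M i) (Pi.evalRingHom R i)

variable (N : Type*) [AddCommGroup N] [Module (∀ j, R j) N]

/-- The part `e_i N` of an `R = ∏_j R_j`-module `N`. -/
def eSub (i : I) : Submodule (∀ j, R j) N :=
  LinearMap.range (LinearMap.lsmul (∀ j, R j) N (piIdem R i))

lemma mem_eSub {i : I} {x : N} : x ∈ eSub R N i ↔ ∃ m : N, piIdem R i • m = x := by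
  simp [eSub, LinearMap.mem_range, LinearMap.lsmul_apply]

lemma single_smul_mem_eSub (i : I) (r : R i) {x : N} (hx : x ∈ eSub R N i) :
    (Pi.single i r : ∀ j, R j) • x ∈ eSub R N i := by
  obtain ⟨m, rfl⟩ := (mem_eSub R N).mp hx
  refine (mem_eSub R N).mpr ⟨(Pi.single i r : ∀ j, R j) • m, ?_⟩
  rw [smul_smul, smul_smul, mul_comm]

/-- `e_i N` is an `R_i`-module, `R_i` acting through the `i`-th component. -/
instance eSubSMul (i : I) : SMul (R i) (eSub R N i) where
  smul r x := ⟨(Pi.single i r : ∀ j, R j) • (x : N), single_smul_mem_eSub R N i r x.2⟩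

lemma eSub_smul_def (i : I) (r : R i) (x : eSub R N i) :
    ((r • x : eSub R N i) : N) = (Pi.single i r : ∀ j, R j) • (x : N) := rfl

instance eSubModule (i : I) : Module (R i) (eSub R N i) where
  one_smul x := by
    ext
    rw [eSub_smul_def]
    obtain ⟨m, hm⟩ := (mem_eSub R N).mp x.2
    rw [← hm, smul_smul, ← piIdem_eq_single, piIdem_mul_self]
  mul_smul r s x := by
    ext
    rw [eSub_smul_def, eSub_smul_def, eSub_smul_def, smul_smul, Pi.single_mul]
  smul_zero r := by
    ext
    rw [eSub_smul_def]
    simp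
  smul_add r x y := by
    ext
    rw [eSub_smul_def]
    simp [eSub_smul_def]
  add_smul r s x := by
    ext
    rw [eSub_smul_def, Pi.single_add]
    simp [eSub_smul_def, add_smul]
  zero_smul x := by
    ext
    rw [eSub_smul_def, Pi.single_zero]
    simp

/-- `M_i ⊗_{R_i} (e_i N)` is regarded as a module over `R = ∏_j R_j` via the
projection `R → R_i`. -/
instance tensModule (i : I) : Module (∀ j, R j) ((M i) ⊗[R i] (eSub R N i)) :=
  Module.compHom _ (Pi.evalRingHom R i)

lemma tensModule_smul_def (i : I) (r : ∀ j, R j) (t : (M i) ⊗[R i] (eSub R N i)) :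
    r • t = r i • t := rfl

lemma piIdem_smul_eSub (i : I) (x : eSub R N i) : piIdem R i • (x : N) = x := by
  obtain ⟨m, hm⟩ := (mem_eSub R N).mp x.2
  rw [← hm, smul_smul, piIdem_mul_self]

lemma mul_piIdem (i : I) (r : ∀ j, R j) : r * piIdem R i = Pi.single i (r i) := by
  funext j
  by_cases h : j = i
  · subst h; simp [piIdem]
  · simp [piIdem, h]

/-- Multiplication by `e_i`, as a map from `N` onto `e_i N`. -/
def toESub (i : I) : N →ₗ[∀ j, R j] eSub R N i :=
  (LinearMap.lsmul (∀ j, R j) N (piIdem R i)).rangeRestrict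

lemma coe_toESub (i : I) (n : N) : (toESub R N i n : N) = piIdem R i • n := rfl

lemma toESub_coe (i : I) (x : eSub R N i) : toESub R N i x = x :=
  Subtype.ext (piIdem_smul_eSub R N i x)

lemma toESub_smul (i : I) (r : ∀ j, R j) (n : N) :
    toESub R N i (r • n) = r i • toESub R N i n := by
  ext
  rw [eSub_smul_def, coe_toESub, coe_toESub, ← mul_piIdem, smul_smul, smul_smul, mul_assoc,
    piIdem_mul_self, mul_comm]

lemma single_smul_eq_smul_single (i : I) (r : ∀ j, R j) (m : M i) :
    (Pi.single i (r i • m) : ∀ j, M j) = r • (Pi.single i m : ∀ j, M j) := by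
  funext j
  by_cases h : j = i
  · subst h; simp
  · simp [Pi.single_eq_of_ne h]

/-- The map `M_i ⊗_{R_i} (e_i N) → (∏_j M_j) ⊗_R N` induced by the inclusions. -/
def tensorIncl (i : I) :
    (M i) ⊗[R i] (eSub R N i) →ₗ[∀ j, R j] (∀ j, M j) ⊗[∀ j, R j] N :=
  let f : (M i) ⊗[R i] (eSub R N i) →+ (∀ j, M j) ⊗[∀ j, R j] N :=
    TensorProduct.liftAddHom
      { toFun := fun m =>
          { toFun := fun x => (Pi.single i m : ∀ j, M j) ⊗ₜ[∀ j, R j] (x : N)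
            map_zero' := by simp
            map_add' := fun x y => by simp [TensorProduct.tmul_add] }
        map_zero' := by ext; simp
        map_add' := fun m m' => by ext; simp [Pi.single_add, TensorProduct.add_tmul] }
      (fun r m x => by
        have h := single_smul_eq_smul_single R M i (Pi.single i r) m
        rw [Pi.single_eq_same] at h
        simp only [AddMonoidHom.coe_mk, ZeroHom.coe_mk, eSub_smul_def, h,
          TensorProduct.smul_tmul])
  { f with
    map_smul' := fun r t => by
      change f (r i • t) = r • f t
      induction t with
      | zero => simp
      | add a b ha hb => rw [smul_add, map_add, ha, hb, map_add, smul_add]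
      | tmul m x =>
        change (Pi.single i (r i • m) : ∀ j, M j) ⊗ₜ[∀ j, R j] (x : N) =
          r • ((Pi.single i m : ∀ j, M j) ⊗ₜ[∀ j, R j] (x : N))
        rw [single_smul_eq_smul_single, TensorProduct.smul_tmul'] }

lemma tensorIncl_tmul (i : I) (m : M i) (x : eSub R N i) :
    tensorIncl R M N i (m ⊗ₜ x) = (Pi.single i m : ∀ j, M j) ⊗ₜ[∀ j, R j] (x : N) := rfl

/-- The map `(∏_j M_j) ⊗_R N → M_i ⊗_{R_i} (e_i N)` induced by the projections. -/
def tensorProj (i : I) :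
    (∀ j, M j) ⊗[∀ j, R j] N →ₗ[∀ j, R j] (M i) ⊗[R i] (eSub R N i) :=
  TensorProduct.lift <| LinearMap.mk₂ (∀ j, R j) (fun m n => m i ⊗ₜ[R i] toESub R N i n)
    (fun m m' n => TensorProduct.add_tmul _ _ _)
    (fun r m n => (TensorProduct.smul_tmul' (r i) (m i) (toESub R N i n)).symm)
    (fun m n n' => by rw [map_add, TensorProduct.tmul_add])
    (fun r m n => by rw [toESub_smul, TensorProduct.tmul_smul, tensModule_smul_def])

lemma tensorProj_tmul (i : I) (m : ∀ j, M j) (n : N) :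
    tensorProj R M N i (m ⊗ₜ n) = m i ⊗ₜ[R i] toESub R N i n := rfl

/-- For each `i`, the `R`-module `M_i ⊗_{R_i} (e_i N)` is a retract of
`(∏_j M_j) ⊗_R N`. -/
theorem tensor_component_retract (i : I) :
    ∃ (s : (M i) ⊗[R i] (eSub R N i) →ₗ[∀ j, R j] (∀ j, M j) ⊗[∀ j, R j] N)
      (p : (∀ j, M j) ⊗[∀ j, R j] N →ₗ[∀ j, R j] (M i) ⊗[R i] (eSub R N i)),
      p.comp s = LinearMap.id := by
  refine ⟨tensorIncl R M N i, tensorProj R M N i, LinearMap.ext fun t => ?_⟩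
  rw [LinearMap.comp_apply, LinearMap.id_apply]
  induction t with
  | zero => simp
  | add a b ha hb => rw [map_add, map_add, ha, hb]
  | tmul m x => rw [tensorIncl_tmul, tensorProj_tmul, Pi.single_eq_same, toESub_coe]

end
end

section
/- The residue field ℚ = R/𝔪, regarded as an R-module, admits an injective resolution 0 → ℚ → J_0 → J_1 → ⋯ → J_r → 0 of R-modules in which J_i is isomorphic to a direct sum of binomial(r, i) copies of T (so in particular each J_i is an injective, 𝔪-power-torsion R-module). This resolution is the ℚ-dual of the Koszul resolution of ℚ by free R-modules. -/
noncomputable section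

/-- `R = ℚ[x₁,…,x_r]`. -/
abbrev PolyR (r : ℕ) : Type := MvPolynomial (Fin r) ℚ

/-- The maximal ideal `𝔪 = (x₁,…,x_r)` of polynomials with zero constant term. -/
def mIdeal (r : ℕ) : Ideal (PolyR r) := Ideal.span (Set.range MvPolynomial.X)

/-- The `ℚ`-linear dual `Hom_ℚ(R, ℚ)`. -/
abbrev DualR (r : ℕ) : Type := PolyR r →ₗ[ℚ] ℚ

/-- The dual is an `R`-module via `(a · φ)(b) = φ(a b)`. -/
instance dualRModule (r : ℕ) : Module (PolyR r) (DualR r) where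
  smul a φ := φ.comp (LinearMap.mulLeft ℚ a)
  one_smul φ := LinearMap.ext fun p => by
    show φ (1 * p) = φ p
    rw [one_mul]
  mul_smul a b φ := LinearMap.ext fun p => by
    show φ (a * b * p) = φ (b * (a * p))
    ring_nf
  smul_zero a := LinearMap.ext fun p => by
    show (0 : DualR r) (a * p) = 0
    rfl
  smul_add a φ ψ := LinearMap.ext fun p => by
    show (φ + ψ) (a * p) = φ (a * p) + ψ (a * p)
    rfl
  add_smul a b φ := LinearMap.ext fun p => by
    show φ ((a + b) * p) = φ (a * p) + φ (b * p)
    rw [add_mul, map_add]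
  zero_smul φ := LinearMap.ext fun p => by
    show φ (0 * p) = 0
    rw [zero_mul, map_zero]

lemma DualR.smul_apply {r : ℕ} (a : PolyR r) (φ : DualR r) (p : PolyR r) :
    (a • φ : DualR r) p = φ (a * p) := rfl

/-- The `R`-submodule `T ⊆ Hom_ℚ(R,ℚ)` of functionals vanishing on some power of `𝔪`
(it realizes `H_*(B𝕋^r; ℚ)`). -/
def Tsub (r : ℕ) : Submodule (PolyR r) (DualR r) where
  carrier := {φ | ∃ n : ℕ, ∀ p ∈ (mIdeal r) ^ n, φ p = 0}
  zero_mem' := ⟨0, fun p _ => rfl⟩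
  add_mem' := by
    rintro φ ψ ⟨n, hn⟩ ⟨m, hm⟩
    refine ⟨n + m, fun p hp => ?_⟩
    have hpn : p ∈ (mIdeal r) ^ n := Ideal.pow_le_pow_right (by omega) hp
    have hpm : p ∈ (mIdeal r) ^ m := Ideal.pow_le_pow_right (by omega) hp
    show φ p + ψ p = 0
    rw [hn p hpn, hm p hpm, add_zero]
  smul_mem' := by
    rintro a φ ⟨n, hn⟩
    refine ⟨n, fun p hp => ?_⟩
    rw [DualR.smul_apply]
    exact hn _ (Ideal.mul_mem_left _ a hp)

/-- `T`, the `𝔪`-power-torsion part of the dual of `R`, as an `R`-module. -/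
abbrev Tmod (r : ℕ) : Type := ↥(Tsub r)

noncomputable instance (r : ℕ) : AddCommGroup (Tmod r) := inferInstance

noncomputable instance (r : ℕ) : Module (PolyR r) (Tmod r) := inferInstance

/-- An `R`-module is `𝔪`-power-torsion if each element is annihilated by a power of `𝔪`. -/
def IsMTorsion (r : ℕ) (N : Type*) [AddCommGroup N] [Module (PolyR r) N] : Prop :=
  ∀ x : N, ∃ n : ℕ, ∀ a ∈ (mIdeal r) ^ n, a • x = 0

end

noncomputable section

section Cone

universe u v

variable {R : Type u} [CommRing R]

/-- The terms `J₀, J₁ × J₀, J₂ × J₁, …` of the cone of an endomorphism of a complex `J`. -/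
def coneObj (J : ℕ → ModuleCat.{v} R) : ℕ → ModuleCat.{v} R
  | 0 => J 0
  | n + 1 => ModuleCat.of R (J (n + 1) × J n)

/-- The differential `(u, v) ↦ (d u, a u - d v)` of the cone of multiplication by `a`. -/
def coneD (a : R) {J : ℕ → ModuleCat.{v} R} (d : ∀ n, J n →ₗ[R] J (n + 1)) :
    ∀ n, coneObj J n →ₗ[R] coneObj J (n + 1)
  | 0 => (d 0).prod (a • LinearMap.id)
  | n + 1 => ((d (n + 1)).comp (LinearMap.fst R (J (n + 1)) (J n))).prod
      (a • LinearMap.fst R (J (n + 1)) (J n) - (d n).comp (LinearMap.snd R (J (n + 1)) (J n)))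

/-- If `J` is exact in positive degrees and `a` acts surjectively on the degree-zero cohomology,
then the cone of multiplication by `a` is exact in positive degrees. -/
lemma range_coneD_eq_ker (a : R) {J : ℕ → ModuleCat.{v} R} (d : ∀ n, J n →ₗ[R] J (n + 1))
    (hd : ∀ n, LinearMap.range (d n) = LinearMap.ker (d (n + 1)))
    (ha : ∀ u : J 0, d 0 u = 0 → ∃ w : J 0, d 0 w = 0 ∧ a • w = u) (n : ℕ) :
    LinearMap.range (coneD a d n) = LinearMap.ker (coneD a d (n + 1)) := by
  have hdd (n : ℕ) (u : J n) : d (n + 1) (d n u) = 0 := by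
    rw [← LinearMap.mem_ker, ← hd]
    exact LinearMap.mem_range_self _ u
  have lift (n : ℕ) (u : J (n + 1)) (hu : d (n + 1) u = 0) : ∃ w, d n w = u := by
    rwa [← LinearMap.mem_ker, ← hd] at hu
  have hsq (n : ℕ) (u : J (n + 1)) (v : J n) :
      a • d (n + 1) u - d (n + 1) (a • u - d n v) = 0 := by
    rw [map_sub, map_smul, hdd, sub_zero, sub_self]
  apply le_antisymm
  · rintro _ ⟨w, rfl⟩
    cases n with
    | zero => exact Prod.ext (hdd 0 w) (sub_eq_zero.2 (map_smul (d 0) a w).symm)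
    | succ n => exact Prod.ext (hdd (n + 1) w.1) (hsq n w.1 w.2)
  · rintro ⟨u, v⟩ hw
    have hu : d (n + 1) u = 0 := congrArg Prod.fst hw
    have huv : a • u - d n v = 0 := congrArg Prod.snd hw
    obtain ⟨u', rfl⟩ := lift n u hu
    have hv : d n (v - a • u') = 0 := by
      rw [map_sub, map_smul, ← neg_sub, huv, neg_zero]
    cases n with
    | zero =>
      obtain ⟨w, hw₀, hw⟩ := ha _ hv
      have h₁ : d 0 (u' + w) = d 0 u' := by rw [map_add, hw₀, add_zero]
      have h₂ : a • (u' + w) = v := by rw [smul_add, hw, add_sub_cancel]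
      exact ⟨(u' + w : J 0), Prod.ext h₁ h₂⟩
    | succ n =>
      obtain ⟨w, hw⟩ := lift n _ hv
      have h₂ : a • u' - d n (-w) = v := by rw [map_neg, hw, sub_neg_eq_add, add_sub_cancel]
      exact ⟨((u', -w) : J (n + 1) × J n), Prod.ext rfl h₂⟩

/-- Pascal rule for finite powers of a module. -/
def powChooseEquiv (R : Type u) [CommRing R] (M : Type v) [AddCommGroup M] [Module R M]
    (k n : ℕ) :
    ((Fin (k.choose (n + 1)) → M) × (Fin (k.choose n) → M)) ≃ₗ[R]
      (Fin ((k + 1).choose (n + 1)) → M) :=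
  (LinearEquiv.sumArrowLequivProdArrow _ _ R M).symm ≪≫ₗ
    LinearEquiv.funCongrLeft R M ((finCongr (by rw [Nat.choose_succ_succ', add_comm])).trans
      finSumFinEquiv.symm)

/-- If each `a i` with `i < k` acts surjectively on the part of `M` annihilated by the preceding
elements, then the Koszul complex of `a 0, …, a (k - 1)` with coefficients in `M` is exact in
positive degrees. -/
theorem exists_koszul_complex {M : Type v} [AddCommGroup M] [Module R M] (a : ℕ → R) (k : ℕ)
    (ha : ∀ i < k, ∀ m : M, (∀ j < i, a j • m = 0) →
      ∃ m' : M, (∀ j < i, a j • m' = 0) ∧ a i • m' = m) :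
    ∃ (J : ℕ → ModuleCat.{v} R) (f : M ≃ₗ[R] J 0) (d : ∀ n, J n →ₗ[R] J (n + 1)),
      (∀ i, Nonempty (J i ≃ₗ[R] (Fin (k.choose i) → M))) ∧
      (∀ m, d 0 (f m) = 0 ↔ ∀ j < k, a j • m = 0) ∧
      ∀ n, LinearMap.range (d n) = LinearMap.ker (d (n + 1)) := by
  induction k with
  | zero =>
    refine ⟨fun n => ModuleCat.of R (Fin (Nat.choose 0 n) → M),
      (LinearEquiv.funUnique (Fin 1) R M).symm, fun n => 0, fun i => ⟨LinearEquiv.refl R _⟩,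
      fun m => iff_of_true rfl (by simp), fun n => ?_⟩
    have : Subsingleton (ModuleCat.of R (Fin (Nat.choose 0 (n + 1)) → M)) :=
      inferInstanceAs (Subsingleton (Fin 0 → M))
    exact Subsingleton.elim _ _
  | succ k ih =>
    obtain ⟨J, f, d, hJ, hf, hd⟩ := ih fun i hi => ha i (hi.trans k.lt_succ_self)
    refine ⟨coneObj J, f, coneD (a k) d, ?_, fun m => ?_, range_coneD_eq_ker (a k) d hd ?_⟩
    · rintro (_ | n)
      · obtain ⟨e⟩ := hJ 0
        exact ⟨e ≪≫ₗ LinearEquiv.funCongrLeft R M (finCongr (by simp))⟩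
      · obtain ⟨e⟩ := hJ (n + 1)
        obtain ⟨e'⟩ := hJ n
        exact ⟨(e.prodCongr e') ≪≫ₗ powChooseEquiv R M k n⟩
    · rw [Nat.forall_lt_succ_right, ← hf]
      refine Prod.ext_iff.trans (and_congr Iff.rfl ?_)
      change a k • f m = 0 ↔ _
      rw [← map_smul, LinearEquiv.map_eq_zero_iff]
    · intro u hu
      obtain ⟨m, rfl⟩ := f.surjective u
      obtain ⟨m', hm', rfl⟩ := ha k k.lt_succ_self m ((hf m).1 hu)
      exact ⟨f m', (hf m').2 hm', (map_smul f _ _).symm⟩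

end Cone

section TorsionDual

open MvPolynomial

variable {r : ℕ}

lemma mIdeal_eq_idealOfVars (r : ℕ) : mIdeal r = idealOfVars (Fin r) ℚ := rfl

lemma isMTorsion_Tmod (r : ℕ) : IsMTorsion r (Tmod r) := by
  rintro ⟨φ, n, hn⟩
  refine ⟨n, fun a ha => Subtype.ext (LinearMap.ext fun p => ?_)⟩
  exact hn _ (Ideal.mul_mem_right p _ ha)

lemma IsMTorsion.pi {ι : Type*} [Finite ι] {N : Type*} [AddCommGroup N] [Module (PolyR r) N]
    (h : IsMTorsion r N) : IsMTorsion r (ι → N) := by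
  intro x
  cases nonempty_fintype ι
  choose n hn using fun i => h (x i)
  refine ⟨Finset.univ.sup n, fun a ha => funext fun i => ?_⟩
  exact hn i a (Ideal.pow_le_pow_right (Finset.le_sup (Finset.mem_univ i)) ha)

lemma IsMTorsion.of_linearEquiv {N N' : Type*} [AddCommGroup N] [Module (PolyR r) N]
    [AddCommGroup N'] [Module (PolyR r) N'] (h : IsMTorsion r N) (e : N' ≃ₗ[PolyR r] N) :
    IsMTorsion r N' := by
  intro x
  obtain ⟨n, hn⟩ := h (e x)
  exact ⟨n, fun a ha => e.injective (by rw [map_smul, hn a ha, map_zero])⟩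

lemma IsMTorsion.exists_pow_smul_range_eq_zero {N P : Type*} [AddCommGroup N]
    [Module (PolyR r) N] [AddCommGroup P] [Module (PolyR r) P] [Module.Finite (PolyR r) P]
    (h : IsMTorsion r N) (g : P →ₗ[PolyR r] N) :
    ∃ n : ℕ, ∀ b ∈ mIdeal r ^ n, ∀ x : P, b • g x = 0 := by
  obtain ⟨S, hS⟩ : (⊤ : Submodule (PolyR r) P).FG := Module.Finite.fg_top
  choose n hn using fun x => h (g x)
  refine ⟨S.sup n, fun b hb x => ?_⟩
  have hx : x ∈ Submodule.span (PolyR r) (S : Set P) := hS ▸ Submodule.mem_top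
  induction hx using Submodule.span_induction with
  | mem x hx => exact hn x b (Ideal.pow_le_pow_right (Finset.le_sup hx) hb)
  | zero => rw [map_zero, smul_zero]
  | add x y _ _ hx hy => rw [map_add, smul_add, hx, hy, add_zero]
  | smul c x _ hx => rw [map_smul, smul_comm, hx, smul_zero]

/-- By the Artin–Rees lemma, a homomorphism from an ideal `I` whose image is annihilated by a power
of `𝔞` vanishes on the intersection of `I` with a power of `𝔞`. -/
lemma exists_pow_le_ker_of_smul_eq_zero {A N : Type*} [CommRing A] [IsNoetherianRing A]
    [AddCommGroup N] [Module A N] (𝔞 I : Ideal A) (g : I →ₗ[A] N) (n : ℕ)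
    (hn : ∀ b ∈ 𝔞 ^ n, ∀ x : I, b • g x = 0) :
    ∃ k : ℕ, ∀ x : I, (x : A) ∈ 𝔞 ^ k → g x = 0 := by
  obtain ⟨k, hk⟩ := Ideal.exists_pow_inf_eq_pow_smul 𝔞 I
  refine ⟨n + k, fun x hx => ?_⟩
  have hmem : (x : A) ∈ 𝔞 ^ n • I := by
    have h : (x : A) ∈ 𝔞 ^ (n + k) • (⊤ : Ideal A) ⊓ I := ⟨by simpa using hx, x.2⟩
    rw [hk _ (Nat.le_add_left k n), Nat.add_sub_cancel] at h
    exact Submodule.smul_mono le_rfl inf_le_right h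
  have hle : 𝔞 ^ n • I ≤ (LinearMap.ker g).map I.subtype :=
    Submodule.smul_le.2 fun b hb c hc =>
      ⟨b • ⟨c, hc⟩, (map_smul g b ⟨c, hc⟩).trans (hn b hb _), rfl⟩
  obtain ⟨y, hy, h_eq⟩ := hle hmem
  rwa [← Subtype.ext h_eq]

/-- A functional on a subspace `U` that vanishes on `U ⊓ W` extends to a functional that vanishes
on `W`. -/
lemma exists_extend_vanishing {K V : Type*} [Field K] [AddCommGroup V] [Module K V]
    (U W : Submodule K V) (φ : U →ₗ[K] K) (hφ : ∀ u : U, (u : V) ∈ W → φ u = 0) :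
    ∃ ψ : V →ₗ[K] K, (∀ u : U, ψ u = φ u) ∧ ∀ w ∈ W, ψ w = 0 := by
  have hmem : φ ∈ LinearMap.range (W.mkQ.comp U.subtype).dualMap := by
    rw [LinearMap.range_dualMap_eq_dualAnnihilator_ker, Submodule.mem_dualAnnihilator]
    exact fun u hu => hφ u (by simpa using hu)
  obtain ⟨χ, rfl⟩ := hmem
  refine ⟨χ.comp W.mkQ, fun u => rfl, fun w hw => ?_⟩
  rw [LinearMap.comp_apply, Submodule.mkQ_apply, (Submodule.Quotient.mk_eq_zero W).2 hw, map_zero]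

theorem baer_Tmod (r : ℕ) : Module.Baer (PolyR r) (Tmod r) := by
  intro I g
  obtain ⟨n, hn⟩ := (isMTorsion_Tmod r).exists_pow_smul_range_eq_zero g
  obtain ⟨k, hk⟩ := exists_pow_le_ker_of_smul_eq_zero (mIdeal r) I g n hn
  let φ : I.restrictScalars ℚ →ₗ[ℚ] ℚ :=
    { toFun := fun a => (g ⟨a.1, a.2⟩ : DualR r) 1
      map_add' := fun a b =>
        congrArg (fun χ : Tmod r => (χ : DualR r) 1) (map_add g ⟨a.1, a.2⟩ ⟨b.1, b.2⟩)
      map_smul' := fun c a => by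
        have h : (⟨(c • a).1, (c • a).2⟩ : I) = (C c : PolyR r) • ⟨a.1, a.2⟩ :=
          Subtype.ext (MvPolynomial.smul_eq_C_mul _ _)
        rw [h, map_smul]
        change (g ⟨a.1, a.2⟩ : DualR r) (C c * 1) = c • (g ⟨a.1, a.2⟩ : DualR r) 1
        rw [← MvPolynomial.smul_eq_C_mul, map_smul] }
  obtain ⟨ψ, hψ, hψ₀⟩ := exists_extend_vanishing (I.restrictScalars ℚ)
    ((mIdeal r ^ k).restrictScalars ℚ) φ fun a ha =>
      congrArg (fun χ : Tmod r => (χ : DualR r) 1) (hk ⟨a.1, a.2⟩ ha)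
  refine ⟨LinearMap.toSpanSingleton (PolyR r) (Tmod r) ⟨ψ, k, hψ₀⟩, fun x hx => ?_⟩
  refine Subtype.ext (LinearMap.ext fun p => ?_)
  change ψ (x * p) = (g ⟨x, hx⟩ : DualR r) p
  have h : (p • ⟨x, hx⟩ : I) = ⟨x * p, I.mul_mem_right p hx⟩ := Subtype.ext (mul_comm p x)
  have h₁ : ψ (x * p) = (g (p • ⟨x, hx⟩) : DualR r) 1 := by
    rw [h]
    exact hψ ⟨x * p, I.mul_mem_right p hx⟩
  rw [h₁, map_smul]
  change (g ⟨x, hx⟩ : DualR r) (p * 1) = _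
  rw [mul_one]

/-- Precomposition of functionals with division by `x_i`. -/
def divXDual (i : Fin r) (φ : DualR r) : DualR r where
  toFun p := φ (p.divMonomial (Finsupp.single i 1))
  map_add' p q := by rw [add_divMonomial, map_add]
  map_smul' c p := by
    have h : (c • p).divMonomial (Finsupp.single i 1) =
        c • p.divMonomial (Finsupp.single i 1) := by
      ext s
      simp
    rw [h, map_smul, RingHom.id_apply]

lemma X_smul_divXDual (i : Fin r) (φ : DualR r) : (X i : PolyR r) • divXDual i φ = φ :=
  LinearMap.ext fun p => congrArg φ (X_mul_divMonomial i p)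

lemma X_smul_divXDual_of_ne {i j : Fin r} (hij : j ≠ i) (φ : DualR r) :
    (X j : PolyR r) • divXDual i φ = divXDual i ((X j : PolyR r) • φ) := by
  refine LinearMap.ext fun p => congrArg φ ?_
  ext s
  have hsub : Finsupp.single i 1 + s - Finsupp.single j 1 =
      Finsupp.single i 1 + (s - Finsupp.single j 1) := by
    ext l
    by_cases hl : l = i
    · subst hl
      simp [hij]
    · simp [Finsupp.single_apply, Ne.symm hl]
  simp [coeff_X_mul', coeff_divMonomial, hij, hsub]

lemma divXDual_mem_Tsub (i : Fin r) {φ : DualR r} (hφ : φ ∈ Tsub r) : divXDual i φ ∈ Tsub r := by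
  obtain ⟨n, hn⟩ := hφ
  refine ⟨n + 1, fun p hp => hn _ ?_⟩
  rw [mIdeal_eq_idealOfVars, mem_pow_idealOfVars_iff'] at hp ⊢
  intro s hs
  rw [coeff_divMonomial]
  apply hp
  rw [map_add, Finsupp.degree_single]
  omega

/-- The constant coefficient, as an element of `T`. -/
def constCoeffT (r : ℕ) : Tmod r :=
  ⟨lcoeff ℚ 0, 1, fun p hp => by
    rw [mIdeal_eq_idealOfVars, mem_pow_idealOfVars_iff'] at hp
    exact hp 0 (by simp)⟩

lemma mem_mIdeal_iff {p : PolyR r} : p ∈ mIdeal r ↔ coeff 0 p = 0 := by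
  rw [← pow_one (mIdeal r), mIdeal_eq_idealOfVars, mem_pow_idealOfVars_iff']
  simp [Finsupp.degree_eq_zero_iff]

/-- The embedding of the residue field into `T` sending `1` to the constant coefficient. -/
def residueToT (r : ℕ) : (PolyR r ⧸ mIdeal r) →ₗ[PolyR r] Tmod r :=
  (mIdeal r).liftQ (LinearMap.toSpanSingleton (PolyR r) (Tmod r) (constCoeffT r)) fun _ ha =>
    Subtype.ext (LinearMap.ext fun p => mem_mIdeal_iff.1 (Ideal.mul_mem_right p _ ha))

lemma residueToT_mk (a : PolyR r) :
    residueToT r (Submodule.Quotient.mk a) = a • constCoeffT r := rfl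

lemma residueToT_injective (r : ℕ) : Function.Injective (residueToT r) := by
  rw [← LinearMap.ker_eq_bot]
  refine Submodule.ker_liftQ_eq_bot _ _ _ fun a ha => mem_mIdeal_iff.2 ?_
  have h : coeff 0 (a * 1) = 0 := congrArg (fun φ : Tmod r => (φ : DualR r) 1) ha
  rwa [mul_one] at h

/-- The image of the residue field is the socle of `T`. -/
lemma mem_range_residueToT {φ : Tmod r} :
    φ ∈ LinearMap.range (residueToT r) ↔ ∀ i : Fin r, (X i : PolyR r) • φ = 0 := by
  constructor
  · rintro ⟨y, rfl⟩ i
    obtain ⟨a, rfl⟩ := Submodule.Quotient.mk_surjective _ y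
    rw [← map_smul, ← Submodule.Quotient.mk_smul, (Submodule.Quotient.mk_eq_zero _).2, map_zero]
    exact Ideal.mul_mem_right a _ (Ideal.subset_span ⟨i, rfl⟩)
  · intro h
    refine ⟨Submodule.Quotient.mk (C ((φ : DualR r) 1)), Subtype.ext ?_⟩
    rw [residueToT_mk]
    refine LinearMap.ext fun p => ?_
    change coeff 0 (C ((φ : DualR r) 1) * p) = (φ : DualR r) p
    have hφ (q : PolyR r) (hq : q ∈ mIdeal r) : (φ : DualR r) q = 0 := by
      have hle : mIdeal r ≤ LinearMap.ker (LinearMap.toSpanSingleton (PolyR r) (Tmod r) φ) :=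
        Ideal.span_le.2 (by rintro _ ⟨i, rfl⟩; exact h i)
      have h₁ : (φ : DualR r) (q * 1) = 0 :=
        congrArg (fun χ : Tmod r => (χ : DualR r) 1) (hle hq)
      rwa [mul_one] at h₁
    have hp := hφ (p - C (coeff 0 p)) (mem_mIdeal_iff.2 (by simp))
    rw [map_sub, sub_eq_zero, ← mul_one (C _), ← MvPolynomial.smul_eq_C_mul, map_smul] at hp
    rw [hp, coeff_C_mul, smul_eq_mul, mul_comm]
/-- Each variable acts surjectively on the part of `T` annihilated by a set of other variables. -/
lemma exists_X_smul_eq (i : Fin r) (s : Set (Fin r)) (hi : i ∉ s) (φ : Tmod r)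
    (hφ : ∀ j ∈ s, (X j : PolyR r) • φ = 0) :
    ∃ ψ : Tmod r, (∀ j ∈ s, (X j : PolyR r) • ψ = 0) ∧ (X i : PolyR r) • ψ = φ := by
  refine ⟨⟨divXDual i φ, divXDual_mem_Tsub i φ.2⟩, fun j hj => Subtype.ext ?_,
    Subtype.ext (X_smul_divXDual i φ)⟩
  have hji : j ≠ i := fun h => hi (h ▸ hj)
  have h : (X j : PolyR r) • (φ : DualR r) = 0 := congrArg Subtype.val (hφ j hj)
  refine (X_smul_divXDual_of_ne hji φ).trans ?_
  rw [h]
  rfl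

end TorsionDual

end

/-- The residue field `ℚ = R/𝔪`, as an `R`-module, has an injective
resolution `0 → ℚ → J_0 → J_1 → ⋯ → J_r → 0` in which `J_i` is isomorphic to a direct sum of
`binomial(r, i)` copies of `T` (so in particular each `J_i` is an injective,
`𝔪`-power-torsion `R`-module).  (The complex is encoded as an `ℕ`-indexed complex vanishing
in degrees `> r`.) -/
theorem residue_field_injective_resolution
    (r : ℕ) :
    ∃ (J : ℕ → ModuleCat (PolyR r))
      (f : (PolyR r ⧸ mIdeal r) →ₗ[PolyR r] J 0)
      (d : ∀ n : ℕ, J n →ₗ[PolyR r] J (n + 1)),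
      (∀ i ≤ r, Nonempty ((J i) ≃ₗ[PolyR r] (Fin (r.choose i) → Tmod r))) ∧
      (∀ i ≤ r, Module.Injective (PolyR r) (J i) ∧ IsMTorsion r (J i)) ∧
      (∀ n, r < n → Subsingleton (J n)) ∧
      Function.Injective f ∧
      LinearMap.range f = LinearMap.ker (d 0) ∧
      (∀ n : ℕ, LinearMap.range (d n) = LinearMap.ker (d (n + 1))) := by
  let a : ℕ → PolyR r := fun j => if h : j < r then MvPolynomial.X ⟨j, h⟩ else 0
  have ha_lt {j : ℕ} (h : j < r) : a j = MvPolynomial.X ⟨j, h⟩ := dif_pos h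
  obtain ⟨J, e, d, hJ, he, hd⟩ := exists_koszul_complex (M := ULift (Tmod r)) a r (by
    rintro i hi ⟨φ⟩ hφ
    obtain ⟨ψ, hψ, rfl⟩ := exists_X_smul_eq ⟨i, hi⟩ {j | j.1 < i} (lt_irrefl i) φ fun j hj => by
      rw [← ha_lt j.2]
      exact congrArg ULift.down (hφ j hj)
    refine ⟨⟨ψ⟩, fun j hj => ?_, ?_⟩
    · rw [ha_lt (hj.trans hi)]
      exact congrArg ULift.up (hψ ⟨j, hj.trans hi⟩ hj)
    · rw [ha_lt hi]
      rfl)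
  have hJT (i : ℕ) : Nonempty (J i ≃ₗ[PolyR r] (Fin (r.choose i) → Tmod r)) :=
    (hJ i).map fun E => E ≪≫ₗ LinearEquiv.piCongrRight fun _ => ULift.moduleEquiv
  let f : Tmod r ≃ₗ[PolyR r] J 0 := ULift.moduleEquiv.symm ≪≫ₗ e
  have : Module.Injective (PolyR r) (Tmod r) := (baer_Tmod r).injective
  refine ⟨J, f.toLinearMap ∘ₗ residueToT r, d, fun i _ => hJT i, fun i _ => ?_, fun n hn => ?_,
    f.injective.comp (residueToT_injective r), ?_, hd⟩
  · obtain ⟨E⟩ := hJT i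
    exact ⟨((Module.Baer.of_injective inferInstance).of_equiv E.symm).injective,
      (isMTorsion_Tmod r).pi.of_linearEquiv E⟩
  · obtain ⟨E⟩ := hJT n
    rw [Nat.choose_eq_zero_of_lt hn] at E
    exact E.toEquiv.subsingleton
  · ext y
    obtain ⟨φ, rfl⟩ := f.surjective y
    have h₁ : f φ ∈ LinearMap.range (f.toLinearMap ∘ₗ residueToT r) ↔
        φ ∈ LinearMap.range (residueToT r) := by
      simp
    rw [h₁, mem_range_residueToT, LinearMap.mem_ker]
    refine Iff.trans ?_ (he ⟨φ⟩).symm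
    refine ⟨fun h j hj => ?_, fun h i => ?_⟩
    · rw [ha_lt hj]
      exact congrArg ULift.up (h ⟨j, hj⟩)
    · have h₂ := h i i.2
      rw [ha_lt i.2] at h₂
      exact congrArg ULift.down h₂
end
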